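/- arXiv:2310.09451 — 2 statements merged into one kernel-verified Lean document; each statement's English description precedes it below -/
import Mathlib

section
/- Let $G$ be a group and suppose that the group ring $F[G]$ is stably finite for every finite field $F$. Then the group ring $K[G]$ is stably finite for every field $K$. -/
/-!
A failure `A * B = 1`, `B * A ≠ 1` over `K[G]` involves only finitely many scalars of `K`, so it
already occurs over `S[G]` for a finitely generated subring `S` of `K`. Some coefficient `c` of an
entry of `B * A - 1` is then a nonzero element of `S`. Since `S` is of finite type over the
Jacobson ring `ℤ`, it is itself a Jacobson ring, and being reduced it has a maximal ideal `m` with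
`c ∉ m`; by Zariski's lemma the field `S ⧸ m` is a finite `ℤ`-module, hence a finite field.
Reducing coefficients modulo `m` carries the failure to `(S ⧸ m)[G]`, contradicting the
hypothesis. The separation step is `exists_ringHom_finite_field`.
-/

/-- A ring `R` is stably finite if for every `d ≥ 1` and all `d × d` matrices `A B` over `R`,
`A * B = 1` implies `B * A = 1`. -/
def IsStablyFinite (R : Type*) [Ring R] : Prop :=
  ∀ d : ℕ, 1 ≤ d → ∀ A B : Matrix (Fin d) (Fin d) R, A * B = 1 → B * A = 1

theorem isJacobsonRing_int : IsJacobsonRing ℤ := by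
  rw [isJacobsonRing_iff_prime_eq]
  intro P hP
  by_cases hb : P = ⊥
  · subst hb
    refine le_antisymm (fun x hx => ?_) Ideal.le_jacobson
    -- If `x` lies in the Jacobson radical then `x * x + 1` is a unit, i.e. `±1`.
    have hu := Ideal.mem_jacobson_bot.1 hx x
    rw [Ideal.mem_bot]
    rcases Int.isUnit_iff.1 hu with h | h
    · exact mul_self_eq_zero.1 (by linarith)
    · nlinarith [mul_self_nonneg x]
  · have := hP.isMaximal hb
    exact Ideal.jacobson_eq_self_of_isMaximal

theorem finite_of_field_of_module_finite_int (F : Type*) [Field F] [Module.Finite ℤ F] :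
    Finite F := by
  obtain ⟨p, hp⟩ := CharP.exists F
  rcases Nat.eq_zero_or_pos p with rfl | hpos
  · -- In characteristic zero `ℤ` would embed into the integral extension `F`, hence be a field.
    have := CharP.charP_to_charZero F
    exact absurd (isField_of_isIntegral_of_isField (FaithfulSMul.algebraMap_injective ℤ F)
      (Field.toIsField F)) Int.not_isField
  · refine Module.finite_of_fg_torsion F fun x => ?_
    refine ⟨⟨(p : ℤ), mem_nonZeroDivisors_of_ne_zero (by exact_mod_cast hpos.ne')⟩, ?_⟩
    change (p : ℤ) • x = 0
    simp

/-- A nonzero element of a domain finitely generated as a ring stays nonzero in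
some finite residue field, which may be taken in `Type`. -/
theorem exists_ringHom_finite_field (S : Type*) [CommRing S] [IsDomain S] [Algebra.FiniteType ℤ S]
    (c : S) (hc : c ≠ 0) :
    ∃ (F : Type) (_ : Field F) (_ : Finite F) (f : S →+* F), f c ≠ 0 := by
  have := isJacobsonRing_int
  have : IsJacobsonRing S := isJacobsonRing_of_finiteType (A := ℤ)
  have hj : (⊥ : Ideal S).jacobson = ⊥ :=
    IsJacobsonRing.out this (Ideal.isPrime_bot (α := S)).isRadical
  have hcj : c ∉ (⊥ : Ideal S).jacobson := by rwa [hj, Ideal.mem_bot]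
  simp only [Ideal.jacobson, Ideal.mem_sInf, not_forall] at hcj
  obtain ⟨m, ⟨-, hm⟩, hcm⟩ := hcj
  let := Ideal.Quotient.field m
  have : Module.Finite ℤ (S ⧸ m) := finite_of_finite_type_of_isJacobsonRing ℤ (S ⧸ m)
  have : Finite (S ⧸ m) := finite_of_field_of_module_finite_int (S ⧸ m)
  refine ⟨Shrink.{0} (S ⧸ m), inferInstance, inferInstance,
    ((Shrink.ringEquiv.{0} (S ⧸ m)).symm : S ⧸ m →+* Shrink.{0} (S ⧸ m)).comp (Ideal.Quotient.mk m),
    ?_⟩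
  simpa [Ideal.Quotient.eq_zero_iff_mem] using hcm

theorem stably_finite_of_finite_fields_stably_finite
    {G : Type*} [Group G]
    (h : ∀ (F : Type) [Field F] [Finite F], IsStablyFinite (MonoidAlgebra F G)) :
    ∀ (K : Type*) [Field K], IsStablyFinite (MonoidAlgebra K G) := by
  intro K _ d hd A B hAB
  -- The finite set of all scalars occurring in the entries of `A` and `B`.
  let T : Set K := ⋃ i, ⋃ j, ((A i j).coeff '' (A i j).coeff.support ∪
    (B i j).coeff '' (B i j).coeff.support)
  have hT : T.Finite := Set.finite_iUnion fun i => Set.finite_iUnion fun j =>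
    ((Finset.finite_toSet _).image _).union ((Finset.finite_toSet _).image _)
  let S := Algebra.adjoin ℤ T
  have : Algebra.FiniteType ℤ S := .adjoin_of_finite hT
  let ι : S →+* K := S.subtype
  have hι : Function.Injective ι := Subtype.val_injective
  have hlift : ∀ x : MonoidAlgebra K G, x.coeff '' x.coeff.support ⊆ T →
      ∃ y, MonoidAlgebra.mapRingHom G ι y = x := by
    intro x hx
    have : x ∈ Set.range (MonoidAlgebra.map (M := G) (ι : S →+ K)) := by
      rw [MonoidAlgebra.range_map]
      intro g
      by_cases hg : x.coeff g = 0
      · exact ⟨0, by simp [hg]⟩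
      · exact ⟨⟨x.coeff g, Algebra.subset_adjoin (hx ⟨g, by simpa using hg, rfl⟩)⟩, rfl⟩
    exact this
  have hA : ∀ i j, ∃ y, MonoidAlgebra.mapRingHom G ι y = A i j := fun i j => hlift _ fun x hx =>
    Set.mem_iUnion.2 ⟨i, Set.mem_iUnion.2 ⟨j, Or.inl hx⟩⟩
  have hB : ∀ i j, ∃ y, MonoidAlgebra.mapRingHom G ι y = B i j := fun i j => hlift _ fun x hx =>
    Set.mem_iUnion.2 ⟨i, Set.mem_iUnion.2 ⟨j, Or.inr hx⟩⟩
  choose A' hA' using hA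
  choose B' hB' using hB
  let Φ := (MonoidAlgebra.mapRingHom G ι).mapMatrix (m := Fin d)
  have hΦ : Function.Injective Φ :=
    Matrix.map_injective (MonoidAlgebra.map_injective (ι : S →+ K) hι)
  have hΦA : Φ (Matrix.of A') = A := by ext1 i j; exact hA' i j
  have hΦB : Φ (Matrix.of B') = B := by ext1 i j; exact hB' i j
  have hAB' : Matrix.of A' * Matrix.of B' = 1 := hΦ (by rw [map_mul, hΦA, hΦB, hAB, map_one])
  suffices hBA' : Matrix.of B' * Matrix.of A' = 1 by
    rw [← hΦA, ← hΦB, ← map_mul, hBA', map_one]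
  by_contra hne
  obtain ⟨i, j, g, hc⟩ : ∃ i j g,
      ((Matrix.of B' * Matrix.of A' - 1 : Matrix _ _ (MonoidAlgebra S G)) i j).coeff g ≠ 0 := by
    by_contra! hall
    refine hne (sub_eq_zero.1 ?_)
    ext i j g
    rw [hall i j g]; rfl
  obtain ⟨F, _, _, f, hf⟩ := exists_ringHom_finite_field S _ hc
  let Ψ := (MonoidAlgebra.mapRingHom G f).mapMatrix (m := Fin d)
  have hF : Ψ (Matrix.of B') * Ψ (Matrix.of A') = 1 :=
    h F d hd _ _ (by rw [← map_mul, hAB', map_one])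
  have hz : Ψ (Matrix.of B' * Matrix.of A' - 1) = 0 := by
    rw [map_sub, map_mul, hF, map_one, sub_self]
  apply hf
  rw [← MonoidAlgebra.coeff_mapRingHom]
  change ((Ψ (Matrix.of B' * Matrix.of A' - 1)) i j).coeff g = 0
  rw [hz]
  rfl
end

section
/- Let $G$ be a surjunctive group and let $K$ be a finite field. Then the group ring $K[G]$ is stably finite. -/
/-- A group `G` is surjunctive if for every finite set `A`, every injective `G`-equivariant
map `τ : A^G → A^G` which is continuous for the prodiscrete topology is surjective. -/
def Surjunctive (G : Type*) [Group G] : Prop :=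
  ∀ (A : Type) [Finite A] (τ : (G → A) → (G → A)),
    Function.Injective τ →
    (∀ (g : G) (x : G → A), τ (fun h => x (g * h)) = fun h => τ x (g * h)) →
    @Continuous (G → A) (G → A)
      (@Pi.topologicalSpace G (fun _ => A) fun _ => ⊥)
      (@Pi.topologicalSpace G (fun _ => A) fun _ => ⊥) τ →
    Function.Surjective τ

section

variable {G : Type*} [Group G] {K : Type*} [Field K]

variable (G K) in
/-- The representation of `G` on `K^G` by right translations, `(s • x) h = x (h * s)`. -/
def rightTranslation : G →* Module.End K (G → K) where
  toFun s := LinearMap.funLeft K K (fun h => h * s)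
  map_one' := by ext; simp [LinearMap.funLeft_apply]
  map_mul' s t := by ext; simp [LinearMap.funLeft_apply, mul_assoc]

variable (G K) in
/-- The action of `K[G]` on `K^G` that extends `rightTranslation` linearly. -/
noncomputable def convAction : MonoidAlgebra K G →ₐ[K] Module.End K (G → K) :=
  MonoidAlgebra.lift K (Module.End K (G → K)) G (rightTranslation G K)

theorem convAction_apply (a : MonoidAlgebra K G) (x : G → K) (h : G) :
    convAction G K a x h = ∑ s ∈ a.coeff.support, a.coeff s * x (h * s) := by
  simp [convAction, MonoidAlgebra.lift_apply, Finsupp.sum, rightTranslation,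
    LinearMap.funLeft_apply]

theorem convAction_injective : Function.Injective (convAction G K) := by
  classical
  intro a b hab
  -- The value of `a • δ₁` at `s⁻¹` is the coefficient of `a` at `s`.
  have key : ∀ (c : MonoidAlgebra K G) (s : G),
      convAction G K c (Pi.single 1 1) s⁻¹ = c.coeff s := by
    intro c s
    rw [convAction_apply]
    simp [Pi.single_apply, inv_mul_eq_one]
    tauto
  ext s
  rw [← key a, ← key b, hab]

variable (G K) in
/-- The action of `d × d` matrices over `K[G]` on `(K^G)^d`. -/
noncomputable def matrixAction (d : ℕ) :
    Matrix (Fin d) (Fin d) (MonoidAlgebra K G) →+* Module.End K (Fin d → G → K) :=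
  ((endVecRingEquivMatrixEnd (Fin d) K (G → K)).symm : _ →+* _).comp
    (convAction G K).toRingHom.mapMatrix

theorem matrixAction_apply {d : ℕ} (M : Matrix (Fin d) (Fin d) (MonoidAlgebra K G))
    (x : Fin d → G → K) (i : Fin d) (h : G) :
    matrixAction G K d M x i h = ∑ j, convAction G K (M i j) (x j) h := by
  change (∑ j, convAction G K (M i j) (x j)) h = _
  rw [Finset.sum_apply]

theorem matrixAction_injective (d : ℕ) : Function.Injective (matrixAction G K d) :=
  (endVecRingEquivMatrixEnd (Fin d) K (G → K)).symm.injective.comp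
    (Matrix.map_injective convAction_injective)

/-- Identification of `(K^G)^d` with configurations over an alphabet `A` in bijection with `K^d`. -/
def configEquiv {A : Type*} {d : ℕ} (e : (Fin d → K) ≃ A) : (Fin d → G → K) ≃ (G → A) :=
  (Equiv.piComm _).trans (Equiv.arrowCongr (Equiv.refl G) e)

/-- Surjunctivity makes an injective matrix over `K[G]` act surjectively. -/
theorem matrixAction_surjective [Finite K] (hG : Surjunctive G) {d : ℕ}
    (M : Matrix (Fin d) (Fin d) (MonoidAlgebra K G))
    (hM : Function.Injective (matrixAction G K d M)) :
    Function.Surjective (matrixAction G K d M) := by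
  -- `Surjunctive` only quantifies over alphabets in `Type`, so `K^d` is replaced by `Fin n`.
  obtain ⟨n, ⟨e⟩⟩ := Finite.exists_equiv_fin (Fin d → K)
  have hs := hG (Fin n)
    (fun y => configEquiv e (matrixAction G K d M ((configEquiv e).symm y)))
    ((configEquiv e).injective.comp (hM.comp (configEquiv e).symm.injective)) ?_ ?_
  · intro x
    obtain ⟨y, hy⟩ := hs (configEquiv e x)
    exact ⟨_, (configEquiv e).injective hy⟩
  · intro g y
    funext h
    change e _ = e _
    congr 1
    funext i
    change matrixAction G K d M _ i h = matrixAction G K d M _ i (g * h)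
    simp only [matrixAction_apply, convAction_apply, mul_assoc]
    rfl
  · let : TopologicalSpace K := ⊥
    have : DiscreteTopology K := ⟨rfl⟩
    let : TopologicalSpace (Fin n) := ⊥
    have : DiscreteTopology (Fin n) := ⟨rfl⟩
    refine continuous_pi fun h => ?_
    refine (continuous_of_discreteTopology (f := e)).comp (continuous_pi fun i => ?_)
    change Continuous fun y => matrixAction G K d M ((configEquiv e).symm y) i h
    simp only [matrixAction_apply, convAction_apply]
    refine continuous_finsetSum _ fun j _ => continuous_finsetSum _ fun s _ => ?_
    exact (continuous_of_discreteTopology (f := fun c : Fin n => (M i j).coeff s * e.symm c j)).comp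
      (continuous_apply (h * s))

end

theorem surjunctive_group_ring_finite_field_stably_finite
    {G : Type*} [Group G] (hG : Surjunctive G)
    (K : Type*) [Field K] [Finite K] : IsStablyFinite (MonoidAlgebra K G) := by
  intro d _ A B hAB
  have h1 : matrixAction G K d A * matrixAction G K d B = 1 := by rw [← map_mul, hAB, map_one]
  have hl : Function.LeftInverse (matrixAction G K d A) (matrixAction G K d B) :=
    fun x => LinearMap.congr_fun h1 x
  have hr := hl.rightInverse_of_surjective (matrixAction_surjective hG B hl.injective)
  apply matrixAction_injective d
  rw [map_mul, map_one]
  exact LinearMap.ext hr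
end
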